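/- arXiv:1612.05183 — 2 statements merged into one kernel-verified Lean document; each statement's English description precedes it below -/
import Mathlib

section
/- Let n ≥ 1 and 0 ≤ q ≤ n be integers and a = (a_1, …, a_n) ∈ ℝ^n. For u > 0 set φ(t, u) = t/(1 − e^{−u t}) for t ≠ 0 and φ(0, u) = 1/u, and define g_{a,q}(u) = ( Σ_{S ⊆ {1,…,n}, |S| = q} exp(−u Σ_{j∈S} a_j) ) · Π_{j=1}^{n} φ(a_j, u). If every a_j is nonzero and exactly q of the numbers a_1, …, a_n are negative, then lim_{u→+∞} g_{a,q}(u) = (−1)^q · Π_{j=1}^{n} a_j. -/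
/-!
Distributing the exponential over the product turns each summand `S` into a product over `j` of
`(e^{-u a_j} if j ∈ S, else 1) * φ(a_j, u)`. As `u → ∞` such a factor tends to `|a_j|` if `j ∈ S` is
equivalent to `a_j < 0`, and to `0` otherwise (`tendsto_factor`). Hence only `S = {j | a_j < 0}`,
which has `q` elements, survives, and its contribution is `∏ |a_j| = (-1)^q ∏ a_j`.
-/

open Finset

/-- `φ(t, u) = t / (1 − e^{−u t})` for `t ≠ 0`, and `φ(0, u) = 1/u`. -/
noncomputable def phiFactor (t u : ℝ) : ℝ :=
  if t = 0 then 1 / u else t / (1 - Real.exp (-(u * t)))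

/-- `g_{a,q}(u) = (Σ_{S ⊆ {1,…,n}, |S| = q} e^{−u Σ_{j∈S} a_j}) · Π_j φ(a_j, u)`. -/
noncomputable def heatDensity (n q : ℕ) (a : Fin n → ℝ) (u : ℝ) : ℝ :=
  (∑ S ∈ Finset.powersetCard q (Finset.univ : Finset (Fin n)),
      Real.exp (-(u * ∑ j ∈ S, a j))) * ∏ j, phiFactor (a j) u

/-- The limit of a single factor. The set `S` enters only through `P`, standing for `j ∈ S`: the
factor survives exactly when membership in `S` agrees with negativity of `t = a_j`. -/
lemma tendsto_factor (t : ℝ) (ht : t ≠ 0) (P : Prop) [Decidable P] :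
    Filter.Tendsto (fun u : ℝ => (if P then Real.exp (-(u * t)) else 1) * phiFactor t u)
      Filter.atTop (nhds (if (P ↔ t < 0) then |t| else 0)) := by
  simp only [phiFactor, if_neg ht]
  rcases lt_or_gt_of_ne ht with h | h
  · -- For `t < 0` the fraction is rewritten in terms of `exp (u t)`, which tends to `0`.
    have h0 : Filter.Tendsto (fun u : ℝ => Real.exp (u * t)) Filter.atTop (nhds 0) :=
      Real.tendsto_exp_atBot.comp (Filter.tendsto_id.atTop_mul_const_of_neg h)
    have hden : Filter.Tendsto (fun u : ℝ => t / (Real.exp (u * t) - 1)) Filter.atTop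
        (nhds (-t)) := by
      simpa [div_neg, Pi.div_def] using
        (tendsto_const_nhds (x := t)).div (h0.sub_const 1) (by norm_num)
    have key : ∀ᶠ u : ℝ in Filter.atTop,
        t / (1 - Real.exp (-(u * t))) = Real.exp (u * t) * (t / (Real.exp (u * t) - 1)) := by
      filter_upwards [Filter.eventually_gt_atTop 0] with u hu
      have h1 : Real.exp (u * t) < 1 := Real.exp_lt_one_iff.mpr (mul_neg_of_pos_of_neg hu h)
      have h2 : Real.exp (u * t) ≠ 0 := (Real.exp_pos _).ne'
      have h3 : Real.exp (u * t) - 1 ≠ 0 := by linarith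
      rw [Real.exp_neg, show 1 - (Real.exp (u * t))⁻¹ = (Real.exp (u * t) - 1) / Real.exp (u * t) by
        field_simp]
      field_simp
    by_cases hP : P
    · simp only [hP, h, if_true, abs_of_neg h]
      refine hden.congr' ?_
      filter_upwards [key] with u hu
      rw [hu, ← mul_assoc, ← Real.exp_add]
      simp
    · simp only [hP, h, if_false, false_iff, not_true, one_mul]
      have := h0.mul hden
      rw [zero_mul] at this
      exact this.congr' (key.mono fun u hu => hu.symm)
  · have h0 : Filter.Tendsto (fun u : ℝ => Real.exp (-(u * t))) Filter.atTop (nhds 0) :=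
      Real.tendsto_exp_neg_atTop_nhds_zero.comp (Filter.tendsto_id.atTop_mul_const h)
    have hden : Filter.Tendsto (fun u : ℝ => t / (1 - Real.exp (-(u * t)))) Filter.atTop
        (nhds t) := by
      simpa [Pi.div_def] using
        (tendsto_const_nhds (x := t)).div (h0.const_sub 1) (by norm_num)
    by_cases hP : P
    · simpa [hP, h.not_gt] using h0.mul hden
    · simpa [hP, h.not_gt, abs_of_pos h] using hden

lemma heatDensity_eq_sum_prod (n q : ℕ) (a : Fin n → ℝ) (u : ℝ) :
    heatDensity n q a u = ∑ S ∈ Finset.powersetCard q (Finset.univ : Finset (Fin n)),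
      ∏ j, ((if j ∈ S then Real.exp (-(u * a j)) else 1) * phiFactor (a j) u) := by
  rw [heatDensity, Finset.sum_mul]
  refine Finset.sum_congr rfl fun S _ => ?_
  rw [Finset.prod_mul_distrib, Finset.prod_ite_mem, Finset.univ_inter, ← Real.exp_sum,
    Finset.mul_sum, Finset.sum_neg_distrib]

/-- If every `a_j` is nonzero and exactly `q` of the `a_j` are negative, then
`g_{a,q}(u) → (−1)^q Π_j a_j` as `u → +∞`. -/
theorem heatDensity_tendsto_of_nondegenerate (n q : ℕ) (hn : 1 ≤ n) (hq : q ≤ n)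
    (a : Fin n → ℝ) (ha : ∀ j, a j ≠ 0)
    (hneg : ((Finset.univ : Finset (Fin n)).filter (fun j => a j < 0)).card = q) :
    Filter.Tendsto (fun u : ℝ => heatDensity n q a u) Filter.atTop
      (nhds ((-1 : ℝ) ^ q * ∏ j, a j)) := by
  simp only [heatDensity_eq_sum_prod]
  have hlim := tendsto_finsetSum (Finset.powersetCard q (Finset.univ : Finset (Fin n)))
    fun S _ => tendsto_finsetProd (Finset.univ : Finset (Fin n))
      fun j _ => tendsto_factor (a j) (ha j) (j ∈ S)
  convert hlim using 2
  rw [Finset.sum_eq_single (Finset.univ.filter fun j => a j < 0)]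
  · -- At `S = {j | a j < 0}` every factor is `|a j|`, and each negative `a j` contributes one sign.
    rw [← hneg, ← Finset.prod_const, Finset.prod_filter, ← Finset.prod_mul_distrib]
    refine Finset.prod_congr rfl fun j _ => ?_
    by_cases h : a j < 0
    · simp [h, abs_of_neg h]
    · simp [h, abs_of_nonneg (not_lt.mp h)]
  · intro S _ hS
    obtain ⟨j, hj⟩ : ∃ j, ¬(j ∈ S ↔ a j < 0) := by
      by_contra! hall
      exact hS (by ext j; simp [hall j])
    exact Finset.prod_eq_zero (Finset.mem_univ j) (if_neg hj)
  · intro h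
    exact absurd (Finset.mem_powersetCard.mpr ⟨Finset.subset_univ _, hneg⟩) h
end

section
/- Let n ≥ 1 and 0 ≤ q ≤ n be integers and a = (a_1, …, a_n) ∈ ℝ^n. For u > 0 set φ(t, u) = t/(1 − e^{−u t}) for t ≠ 0 and φ(0, u) = 1/u, and define g_{a,q}(u) = ( Σ_{S ⊆ {1,…,n}, |S| = q} exp(−u Σ_{j∈S} a_j) ) · Π_{j=1}^{n} φ(a_j, u). If some a_j equals 0, or if the number of indices j with a_j < 0 is not equal to q, then lim_{u→+∞} g_{a,q}(u) = 0. -/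
/-!
The identity `e^{-ut} φ(t, u) = φ(-t, u)` turns the summand of `g_{a,q}(u)` indexed by `S` into
`∏ j, φ(± a_j, u)`, with sign `-` exactly for `j ∈ S`. Since `φ(t, u) → max t 0` as `u → +∞`, each
summand tends to `∏ j, max (± a_j) 0`. This limit vanishes as soon as some `a_j` is zero, and also
whenever `S` is not the set of indices with `a_j < 0`: an index in the symmetric difference of the
two sets gives a factor `0`. Under the hypotheses, one of these happens for every `S` of size `q`.
-/

open Finset

theorem exp_mul_phiFactor (t u : ℝ) :
    Real.exp (-(u * t)) * phiFactor t u = phiFactor (-t) u := by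
  rcases eq_or_ne t 0 with rfl | ht
  · simp [phiFactor]
  -- At `u = 0` both sides are divisions by zero, hence equal to `0`.
  rcases eq_or_ne u 0 with rfl | hu
  · simp [phiFactor]
  have h0 : u * t ≠ 0 := mul_ne_zero hu ht
  have h1 : Real.exp (u * t) ≠ 1 := by simpa [Real.exp_eq_one_iff] using h0
  have h2 : 1 - Real.exp (u * t) ≠ 0 := sub_ne_zero.2 h1.symm
  have h3 : Real.exp (u * t) - 1 ≠ 0 := sub_ne_zero.2 h1
  have hpos := Real.exp_ne_zero (u * t)
  have h4 : 1 - (Real.exp (u * t))⁻¹ ≠ 0 := by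
    rw [sub_ne_zero, ne_comm, inv_ne_one]; exact h1
  simp only [phiFactor, ht, neg_eq_zero, if_false, mul_neg, neg_neg, Real.exp_neg]
  rw [← mul_div_assoc, div_eq_div_iff h4 h2]
  field_simp
  ring

theorem tendsto_phiFactor_of_pos {t : ℝ} (ht : 0 < t) :
    Filter.Tendsto (phiFactor t) Filter.atTop (nhds t) := by
  have hexp : Filter.Tendsto (fun u : ℝ => Real.exp (-(u * t))) Filter.atTop (nhds 0) :=
    Real.tendsto_exp_neg_atTop_nhds_zero.comp (Filter.tendsto_id.atTop_mul_const ht)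
  have h := (tendsto_const_nhds (x := t)).div ((tendsto_const_nhds (x := (1 : ℝ))).sub hexp)
    (by norm_num)
  have heq : phiFactor t = fun u => t / (1 - Real.exp (-(u * t))) := by
    funext u
    simp [phiFactor, ht.ne']
  rw [heq]
  simpa [Pi.div_def] using h

theorem tendsto_phiFactor (t : ℝ) :
    Filter.Tendsto (phiFactor t) Filter.atTop (nhds (max t 0)) := by
  rcases lt_trichotomy t 0 with ht | rfl | ht
  · -- For `t < 0`, `φ(t, u) = e^{-u(-t)} φ(-t, u)` is a decaying factor times a convergent one.
    have hexp : Filter.Tendsto (fun u : ℝ => Real.exp (-(u * -t))) Filter.atTop (nhds 0) :=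
      Real.tendsto_exp_neg_atTop_nhds_zero.comp
        (Filter.tendsto_id.atTop_mul_const (neg_pos.2 ht))
    have h := hexp.mul (tendsto_phiFactor_of_pos (neg_pos.2 ht))
    simp only [exp_mul_phiFactor, neg_neg, zero_mul] at h
    rwa [max_eq_right ht.le]
  · have heq : phiFactor 0 = fun u : ℝ => u⁻¹ := by
      funext u
      simp [phiFactor]
    rw [heq, max_self]
    exact tendsto_inv_atTop_zero
  · rw [max_eq_left ht.le]
    exact tendsto_phiFactor_of_pos ht

theorem exp_mul_prod_phiFactor {n : ℕ} (a : Fin n → ℝ) (S : Finset (Fin n)) (u : ℝ) :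
    Real.exp (-(u * ∑ j ∈ S, a j)) * ∏ j, phiFactor (a j) u
      = ∏ j, phiFactor (if j ∈ S then -a j else a j) u := by
  have h : Real.exp (-(u * ∑ j ∈ S, a j))
      = ∏ j, if j ∈ S then Real.exp (-(u * a j)) else 1 := by
    rw [Finset.prod_ite_mem, Finset.univ_inter, ← Real.exp_sum, Finset.mul_sum,
      Finset.sum_neg_distrib]
  rw [h, ← Finset.prod_mul_distrib]
  refine Finset.prod_congr rfl fun j _ => ?_
  split_ifs
  · exact exp_mul_phiFactor _ _
  · exact one_mul _

/-- If some `a_j` vanishes, or if the number of negative `a_j` differs from `q`, then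
`g_{a,q}(u) → 0` as `u → +∞`. -/
theorem heatDensity_tendsto_zero_of_degenerate (n q : ℕ) (hn : 1 ≤ n) (hq : q ≤ n)
    (a : Fin n → ℝ)
    (ha : (∃ j, a j = 0) ∨
      ((Finset.univ : Finset (Fin n)).filter (fun j => a j < 0)).card ≠ q) :
    Filter.Tendsto (fun u : ℝ => heatDensity n q a u) Filter.atTop (nhds 0) := by
  simp only [heatDensity, Finset.sum_mul, exp_mul_prod_phiFactor]
  rw [← Finset.sum_const_zero (s := Finset.powersetCard q (Finset.univ : Finset (Fin n)))]
  refine tendsto_finsetSum _ fun S hS => ?_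
  have hcard : S.card = q := (Finset.mem_powersetCard.1 hS).2
  have hlim := tendsto_finsetProd (Finset.univ : Finset (Fin n)) fun j _ =>
    tendsto_phiFactor (if j ∈ S then -a j else a j)
  suffices hzero : ∃ j, (if j ∈ S then -a j else a j) ≤ 0 by
    obtain ⟨j, hj⟩ := hzero
    rwa [Finset.prod_eq_zero (Finset.mem_univ j) (max_eq_right hj)] at hlim
  rcases ha with ⟨j, hj⟩ | hne
  · exact ⟨j, by simp [hj]⟩
  · -- If all signed entries were positive, `S` would be the set of negative indices.
    by_contra! hpos
    apply hne
    rw [← hcard]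
    congr 1
    ext j
    have hj := hpos j
    rw [Finset.mem_filter_univ]
    split_ifs at hj with hjS
    · simpa [hjS] using hj
    · simpa [hjS] using hj.le
end
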